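/- Let (𝒜,𝒳) be a nontrivial (k,m)-net in ℙ²(ℂ) such that at least one class 𝒜_i is a pencil. Then k ≤ 4; moreover if k = 4 then m ≥ 4. -/

import Mathlib

/-- The complex projective plane ℙ²(ℂ) = ℙ(ℂ³). -/
abbrev P2 : Type := Projectivization ℂ (Fin 3 → ℂ)

/-- A line in ℙ²(ℂ): the set of points annihilated by a nonzero linear form on ℂ³. -/
def IsProjLine (L : Set P2) : Prop :=
  ∃ f : (Fin 3 → ℂ) →ₗ[ℂ] ℂ, f ≠ 0 ∧ L = {p : P2 | f p.rep = 0}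

/-- A (k,m)-net in ℙ²(ℂ): a family of `k` pairwise disjoint classes of lines, each of
cardinality `m`, and a finite set `X` of points such that lines of distinct classes meet
in a point of `X` and through every point of `X` passes exactly one line of each class. -/
structure IsNet (k m : ℕ) (A : Fin k → Finset (Set P2)) (X : Set P2) : Prop where
  lines : ∀ i, ∀ L ∈ A i, IsProjLine L
  card_eq : ∀ i, (A i).card = m
  finiteX : X.Finite
  disj : ∀ i j, i ≠ j → Disjoint (A i) (A j)
  meets : ∀ i j, i ≠ j → ∀ L ∈ A i, ∀ L' ∈ A j, ∃ p ∈ X, p ∈ L ∧ p ∈ L'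
  unique_through : ∀ p ∈ X, ∀ i, ∃! L, L ∈ A i ∧ p ∈ L


/-- A class of lines is a pencil if all of its lines pass through a common point. -/
def IsPencil (S : Finset (Set P2)) : Prop :=
  ∃ p : P2, ∀ L ∈ S, p ∈ L


open Polynomial in
theorem core_coeff_deg (B : Finset (ℂ × ℂ)) (i : ℕ) :
    ((∏ b ∈ B, (X - C (C b.1 * X + C b.2 : ℂ[X])) : ℂ[X][X]).coeff i).natDegree ≤ B.card - i := by
  classical
  induction B using Finset.induction_on generalizing i with
  | empty =>
    simp only [Finset.prod_empty, coeff_one]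
    split_ifs <;> simp
  | insert b B hb ih =>
    rw [Finset.prod_insert hb, Finset.card_insert_of_notMem hb, sub_mul, coeff_sub, coeff_C_mul]
    have hl : (C b.1 * X + C b.2 : ℂ[X]).natDegree ≤ 1 := natDegree_linear_le
    have hdeg : (∏ b ∈ B, (X - C (C b.1 * X + C b.2 : ℂ[X])) : ℂ[X][X]).natDegree = B.card :=
      natDegree_finsetProd_X_sub_C_eq_card B _
    refine (natDegree_sub_le _ _).trans (max_le ?_ ?_)
    · cases i with
      | zero => simp
      | succ i => rw [coeff_X_mul]; have := ih i; omega
    · by_cases hi : i ≤ B.card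
      · have := ih i
        have h2 := natDegree_mul_le (p := (C b.1 * X + C b.2 : ℂ[X]))
          (q := (∏ b ∈ B, (X - C (C b.1 * X + C b.2 : ℂ[X])) : ℂ[X][X]).coeff i)
        omega
      · rw [coeff_eq_zero_of_natDegree_lt (by omega)]; simp

open Polynomial in
theorem core_diff (S : Finset ℂ) (B B' : Finset (ℂ × ℂ)) (hB : B.card = S.card)
    (hB' : B'.card = S.card)
    (h : ∀ a ∈ S, ∏ b ∈ B, (X - C (b.1 * a + b.2) : ℂ[X]) = ∏ b ∈ B', (X - C (b.1 * a + b.2))) :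
    ∃ c : ℂ, (∏ b ∈ B', (X - C (C b.1 * X + C b.2 : ℂ[X])) : ℂ[X][X])
      = (∏ b ∈ B, (X - C (C b.1 * X + C b.2 : ℂ[X]))) + C (C c * ∏ a ∈ S, (X - C a)) := by
  set F := (∏ b ∈ B, (X - C (C b.1 * X + C b.2 : ℂ[X])) : ℂ[X][X]) with hF
  set F' := (∏ b ∈ B', (X - C (C b.1 * X + C b.2 : ℂ[X])) : ℂ[X][X]) with hF'
  set G : ℂ[X] := ∏ a ∈ S, (X - C a) with hG
  have hFd : F.natDegree = S.card := hB ▸ natDegree_finsetProd_X_sub_C_eq_card B _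
  have hFd' : F'.natDegree = S.card := hB' ▸ natDegree_finsetProd_X_sub_C_eq_card B' _
  have hFm : F.Monic := monic_prod_of_monic _ _ fun b _ => monic_X_sub_C _
  have hFm' : F'.Monic := monic_prod_of_monic _ _ fun b _ => monic_X_sub_C _
  have hGd : G.natDegree = S.card := natDegree_finsetProd_X_sub_C_eq_card S _
  have hGm : G.Monic := monic_prod_of_monic _ _ fun b _ => monic_X_sub_C _
  have hev : ∀ a ∈ S, ∀ i, (F'.coeff i - F.coeff i).eval a = 0 := by
    intro a ha i
    have h1 : F.map (evalRingHom a) = F'.map (evalRingHom a) := by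
      simpa [hF, hF', Polynomial.map_prod] using h a ha
    have := congrArg (fun p => p.coeff i) h1
    simp only [coeff_map, coe_evalRingHom] at this
    simp [this]
  have hGe : ∀ a ∈ S, G.eval a = 0 := by
    intro a ha
    rw [hG, eval_prod]
    exact Finset.prod_eq_zero ha (by simp)
  refine ⟨(F'.coeff 0 - F.coeff 0).coeff S.card, ?_⟩
  ext1 i
  rw [coeff_add, coeff_C, ← sub_eq_iff_eq_add']
  have hd : (F'.coeff i - F.coeff i).natDegree ≤ S.card - i :=
    (natDegree_sub_le _ _).trans (max_le (hB' ▸ core_coeff_deg B' i) (hB ▸ core_coeff_deg B i))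
  split_ifs with hi
  · subst hi
    rw [← sub_eq_zero]
    set d := F'.coeff 0 - F.coeff 0
    set p := d - C (d.coeff S.card) * G with hp
    have hpd : p.natDegree ≤ S.card := by
      refine (natDegree_sub_le _ _).trans (max_le (by simpa using hd) ?_)
      exact (natDegree_C_mul_le _ _).trans hGd.le
    have hpc : p.coeff S.card = 0 := by
      have : G.coeff S.card = 1 := hGd ▸ hGm.coeff_natDegree
      simp [hp, this]
    refine eq_zero_of_degree_lt_of_eval_finset_eq_zero S ?_ ?_
    · refine lt_of_le_of_ne (natDegree_le_iff_degree_le.1 hpd) ?_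
      intro h
      exact coeff_ne_zero_of_eq_degree h hpc
    · intro a ha
      have := hev a ha 0
      rw [eval_sub] at this
      simp [hp, hGe a ha, d, this]
  · by_cases him : S.card ≤ i
    · rcases him.eq_or_lt with h | h
      · have h1 := hFm.coeff_natDegree
        have h2 := hFm'.coeff_natDegree
        rw [hFd, h] at h1
        rw [hFd', h] at h2
        rw [h1, h2, sub_self]
      · rw [coeff_eq_zero_of_natDegree_lt (by omega), coeff_eq_zero_of_natDegree_lt (by omega), sub_self]
    · refine eq_zero_of_degree_lt_of_eval_finset_eq_zero S ?_ fun a ha => hev a ha i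
      refine (natDegree_le_iff_degree_le.1 hd).trans_lt ?_
      exact_mod_cast (by omega : S.card - i < S.card)

open Polynomial in
/-- Coefficientwise derivative of a bivariate polynomial. -/
noncomputable def dcoef (p : ℂ[X][X]) : ℂ[X][X] :=
  ∑ i ∈ Finset.range (p.natDegree + 1), monomial i (derivative (p.coeff i))

open Polynomial in
theorem dcoef_coeff (p : ℂ[X][X]) (i : ℕ) : (dcoef p).coeff i = derivative (p.coeff i) := by
  simp only [dcoef, finsetSum_coeff, coeff_monomial, Finset.sum_ite_eq', Finset.mem_range]
  split_ifs with h
  · rfl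
  · rw [coeff_eq_zero_of_natDegree_lt (by omega), derivative_zero]

open Polynomial in
theorem dcoef_natDegree_le (p : ℂ[X][X]) : (dcoef p).natDegree ≤ p.natDegree := by
  rw [natDegree_le_iff_coeff_eq_zero]
  intro i hi
  rw [dcoef_coeff, coeff_eq_zero_of_natDegree_lt hi, derivative_zero]

open Polynomial in
theorem dcoef_chain (p : ℂ[X][X]) (l : ℂ[X]) :
    derivative (p.eval l) = (dcoef p).eval l + (derivative p).eval l * derivative l := by
  induction p using Polynomial.induction_on' with
  | add p q hp hq =>
    have : dcoef (p + q) = dcoef p + dcoef q := by ext1 i; simp [dcoef_coeff]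
    rw [this]
    simp only [eval_add, derivative_add, hp, hq]
    ring
  | monomial n a =>
    have : dcoef (monomial n a) = monomial n (derivative a) := by
      ext1 i
      rw [dcoef_coeff, coeff_monomial, coeff_monomial]
      split_ifs <;> simp
    rw [this]
    simp only [eval_monomial, derivative_mul, derivative_monomial, derivative_pow]
    simp
    ring

open Polynomial in
theorem core_key (n : ℕ) (F : ℂ[X][X]) (G : ℂ[X]) (hF : F.Monic) (hFd : F.natDegree = n + 2)
    (a : ℂ) (hG : G.eval a = 0) (hG' : (derivative G).eval a ≠ 0)
    (T : Finset (ℂ × ℂ)) (hT : 3 * n + 4 < T.card)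
    (h : ∀ b ∈ T, ∃ c : ℂ, (F + C (C c * G)).eval (C b.1 * X + C b.2) = 0) : False := by
  classical
  set G1 := derivative G with hG1
  set F1 := derivative F with hF1
  set F2 := derivative F1 with hF2
  set N := F * C G1 - dcoef F * C G with hN
  set K := C G * F1 with hK
  set H := F1 * (dcoef N * (C G * F1) - N * dcoef K) + N * (derivative N * F1 - N * F2) with hH
  have cF : F.coeff (n + 2) = 1 := hFd ▸ hF.coeff_natDegree
  have dF1 : F1.natDegree ≤ n + 1 := by
    have := natDegree_derivative_le F; rw [hFd] at this; exact this
  have cF1 : F1.coeff (n + 1) = n + 2 := by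
    rw [hF1, coeff_derivative, cF]; push_cast; ring
  have dF2 : F2.natDegree ≤ n := by
    have := natDegree_derivative_le F1; rw [hF2]; omega
  have cF2 : F2.coeff n = (n + 2) * (n + 1) := by
    rw [hF2, coeff_derivative, cF1]
  have dN : N.natDegree ≤ n + 2 := by
    refine (natDegree_sub_le _ _).trans (max_le ?_ ?_)
    · exact (natDegree_mul_C_le _ _).trans hFd.le
    · exact (natDegree_mul_C_le _ _).trans ((dcoef_natDegree_le F).trans hFd.le)
  have cN : N.coeff (n + 2) = G1 := by
    rw [hN, coeff_sub, coeff_mul_C, coeff_mul_C, dcoef_coeff, cF]; simp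
  have dDN : (dcoef N).natDegree ≤ n + 2 := (dcoef_natDegree_le N).trans dN
  have cDN : (dcoef N).coeff (n + 2) = derivative G1 := by rw [dcoef_coeff, cN]
  have dN1 : (derivative N).natDegree ≤ n + 1 := by
    have := natDegree_derivative_le N; omega
  have cN1 : (derivative N).coeff (n + 1) = G1 * (n + 2) := by
    rw [coeff_derivative, cN]; push_cast; ring
  have dK : K.natDegree ≤ n + 1 := (natDegree_C_mul_le _ _).trans dF1
  have cK : K.coeff (n + 1) = G * (n + 2) := by rw [hK, coeff_C_mul, cF1]
  have dDK : (dcoef K).natDegree ≤ n + 1 := (dcoef_natDegree_le K).trans dK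
  have cDK : (dcoef K).coeff (n + 1) = G1 * (n + 2) := by
    rw [dcoef_coeff, cK, derivative_mul]; simp [hG1]
  have d1 : (dcoef N * K - N * dcoef K).natDegree ≤ (n + 2) + (n + 1) :=
    (natDegree_sub_le _ _).trans (max_le (natDegree_mul_le_of_le dDN dK)
      (natDegree_mul_le_of_le dN dDK))
  have c1 : (dcoef N * K - N * dcoef K).coeff ((n + 2) + (n + 1))
      = derivative G1 * (G * (n + 2)) - G1 * (G1 * (n + 2)) := by
    rw [coeff_sub, coeff_mul_add_eq_of_natDegree_le dDN dK,
      coeff_mul_add_eq_of_natDegree_le dN dDK, cDN, cK, cN, cDK]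
  have d2 : (derivative N * F1 - N * F2).natDegree ≤ 2 * n + 2 :=
    (natDegree_sub_le _ _).trans (max_le ((natDegree_mul_le_of_le dN1 dF1).trans (by omega))
      ((natDegree_mul_le_of_le dN dF2).trans (by omega)))
  have c2 : (derivative N * F1 - N * F2).coeff (2 * n + 2)
      = G1 * (n + 2) * (n + 2) - G1 * ((n + 2) * (n + 1)) := by
    have e1 : 2 * n + 2 = (n + 1) + (n + 1) := by ring
    have e2 : 2 * n + 2 = (n + 2) + n := by ring
    rw [coeff_sub]
    nth_rw 1 [e1]
    rw [e2, coeff_mul_add_eq_of_natDegree_le dN1 dF1,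
      coeff_mul_add_eq_of_natDegree_le dN dF2, cN1, cF1, cN, cF2]
  have dH : H.natDegree ≤ 3 * n + 4 := by
    refine (natDegree_add_le _ _).trans (max_le ?_ ?_)
    · exact (natDegree_mul_le_of_le dF1 d1).trans (by omega)
    · exact (natDegree_mul_le_of_le dN d2).trans (by omega)
  have cH : H.coeff (3 * n + 4) = (n + 2) * (derivative G1 * (G * (n + 2)) - G1 * (G1 * (n + 2)))
      + G1 * (G1 * (n + 2) * (n + 2) - G1 * ((n + 2) * (n + 1))) := by
    have e1 : 3 * n + 4 = (n + 1) + ((n + 2) + (n + 1)) := by ring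
    have e2 : 3 * n + 4 = (n + 2) + (2 * n + 2) := by ring
    rw [hH, coeff_add]
    nth_rw 1 [e1]
    rw [e2, coeff_mul_add_eq_of_natDegree_le dF1 d1,
      coeff_mul_add_eq_of_natDegree_le dN d2, cF1, c1, cN, c2]
  have hH0 : H = 0 := by
    refine eq_zero_of_natDegree_lt_card_of_eval_eq_zero' H
      (T.image fun b => (C b.1 * X + C b.2 : ℂ[X])) ?_ ?_
    · intro l hl
      obtain ⟨b, hb, rfl⟩ := Finset.mem_image.1 hl
      obtain ⟨c, hc⟩ := h b hb
      set l : ℂ[X] := C b.1 * X + C b.2 with hl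
      have hl' : derivative l = C b.1 := by simp [hl]
      have hc1 := congrArg derivative hc
      rw [eval_add, eval_C, derivative_add, dcoef_chain, hl', derivative_mul] at hc1
      rw [eval_add, eval_C] at hc
      simp only [derivative_C, zero_mul, zero_add, derivative_zero] at hc1
      have hNl : N.eval l = C b.1 * K.eval l := by
        simp only [hN, hK, eval_sub, eval_mul, eval_C]
        linear_combination G1 * hc - G * hc1
      have hNl1 := congrArg derivative hNl
      rw [derivative_mul, dcoef_chain, dcoef_chain, hl'] at hNl1
      have hK1 : derivative K = C G * F2 := by simp [hK, hF2]
      rw [hK1] at hNl1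
      simp only [derivative_C, zero_mul, zero_add, eval_mul, eval_C] at hNl1
      have hKl : K.eval l = G * F1.eval l := by simp [hK]
      simp only [hH, eval_add, eval_mul, eval_sub, eval_C]
      rw [hNl, hKl]
      linear_combination F1.eval l * (G * F1.eval l) * hNl1
    · rw [Finset.card_image_of_injective]
      · omega
      · intro b b' hbb
        have h0 := congrArg (fun p : ℂ[X] => p.coeff 0) hbb
        have h1 := congrArg (fun p : ℂ[X] => p.coeff 1) hbb
        simp [coeff_C] at h0 h1
        exact Prod.ext h1 h0
  rw [hH0, coeff_zero] at cH
  have := congrArg (eval a) cH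
  simp only [eval_add, eval_mul, eval_sub, eval_zero, hG, eval_natCast, eval_ofNat, eval_one] at this
  have h3 : ((n : ℂ) + 2) * (n + 1) * (eval a G1) ^ 2 = 0 := by linear_combination this
  have h4 : ((n : ℂ) + 2) ≠ 0 := by exact_mod_cast (by omega : n + 2 ≠ 0)
  have h5 : ((n : ℂ) + 1) ≠ 0 := by exact_mod_cast (by omega : n + 1 ≠ 0)
  exact mul_ne_zero (mul_ne_zero h4 h5) (pow_ne_zero 2 hG') h3

open Polynomial in
theorem core (m : ℕ) (hm : 2 ≤ m) (S : Finset ℂ) (hS : S.card = m) (B : Fin 3 → Finset (ℂ × ℂ))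
    (hB : ∀ j, (B j).card = m) (hd : ∀ i j, i ≠ j → Disjoint (B i) (B j))
    (h : ∀ a ∈ S, ∀ i j, ∏ b ∈ B i, (X - C (b.1 * a + b.2) : ℂ[X])
      = ∏ b ∈ B j, (X - C (b.1 * a + b.2))) : False := by
  classical
  obtain ⟨n, rfl⟩ : ∃ n, m = n + 2 := ⟨m - 2, by omega⟩
  obtain ⟨a, ha⟩ : S.Nonempty := Finset.card_pos.1 (by omega)
  refine core_key n (∏ b ∈ B 0, (X - C (C b.1 * X + C b.2 : ℂ[X]))) (∏ a ∈ S, (X - C a))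
    (monic_prod_of_monic _ _ fun b _ => monic_X_sub_C _)
    ((natDegree_finsetProd_X_sub_C_eq_card _ _).trans (hB 0)) a ?_ ?_
    (Finset.univ.biUnion B) ?_ ?_
  · rw [eval_prod]
    exact Finset.prod_eq_zero ha (by simp)
  · rw [← Finset.mul_prod_erase _ _ ha, derivative_mul]
    simp only [derivative_sub, derivative_X, derivative_C, eval_add, eval_mul, eval_sub, eval_X,
      eval_C, sub_self, zero_mul, add_zero, sub_zero, one_mul]
    rw [eval_prod, Finset.prod_ne_zero_iff]
    intro b hb
    simpa [sub_eq_zero] using (Finset.ne_of_mem_erase hb).symm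
  · rw [Finset.card_biUnion (fun i _ j _ hij => hd i j hij)]
    simp [hB]; omega
  · intro b hb
    obtain ⟨j, -, hj⟩ := Finset.mem_biUnion.1 hb
    obtain ⟨c, hc⟩ := core_diff S (B 0) (B j) (by rw [hB, hS]) (by rw [hB, hS])
      (fun a ha => h a ha 0 j)
    refine ⟨c, ?_⟩
    rw [← hc, eval_prod]
    exact Finset.prod_eq_zero hj (by simp)

open Polynomial in
theorem net_pencil_le_three (k m : ℕ) (A : Fin k → Finset (Set P2)) (X : Set P2)
    (hm : 1 < m) (hN : IsNet k m A X) (i₀ : Fin k) (hpen : IsPencil (A i₀)) : k ≤ 3 := by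
  classical
  by_contra hk
  push Not at hk
  obtain ⟨P, hP⟩ := hpen
  obtain ⟨e, he, hei⟩ : ∃ e : Fin 3 → Fin k, Function.Injective e ∧ ∀ j, e j ≠ i₀ := by
    have hc : Fintype.card (Fin 3) ≤ Fintype.card {j : Fin k // j ≠ i₀} := by
      simp; omega
    obtain ⟨e⟩ := Function.Embedding.nonempty_of_card_le hc
    exact ⟨fun j => (e j).1, fun a b hab => e.injective (Subtype.ext hab), fun j => (e j).2⟩
  have hform : ∀ L : Set P2, ∃ f : (Fin 3 → ℂ) →ₗ[ℂ] ℂ,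
      IsProjLine L → f ≠ 0 ∧ L = {p : P2 | f p.rep = 0} := by
    intro L
    by_cases h : IsProjLine L
    · obtain ⟨f, hf⟩ := h
      exact ⟨f, fun _ => hf⟩
    · exact ⟨0, fun h' => absurd h' h⟩
  choose φ hφ using hform
  have hφ0 : ∀ i, ∀ L ∈ A i, φ L ≠ 0 := fun i L hL => (hφ L (hN.lines i L hL)).1
  have hφL : ∀ i, ∀ L ∈ A i, L = {p : P2 | φ L p.rep = 0} :=
    fun i L hL => (hφ L (hN.lines i L hL)).2
  have hmem : ∀ i, ∀ L ∈ A i, ∀ p, p ∈ L ↔ φ L p.rep = 0 := by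
    intro i L hL p
    conv_lhs => rw [hφL i L hL]
    rfl
  have hprop : ∀ i j, ∀ L ∈ A i, ∀ L' ∈ A j, ∀ c : ℂ, φ L = c • φ L' → L = L' := by
    intro i j L hL L' hL' c hc
    have hc0 : c ≠ 0 := by
      rintro rfl
      exact hφ0 i L hL (by simpa using hc)
    ext p
    rw [hmem i L hL, hmem j L' hL', hc]
    simp [hc0]
  set v := P.rep with hv
  have hv0 : v ≠ 0 := P.rep_nonzero
  have hpv : ∀ L ∈ A i₀, φ L v = 0 := fun L hL => (hmem i₀ L hL P).1 (hP L hL)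
  have hPX : P ∉ X := by
    intro h
    obtain ⟨L₁, h1, L₂, h2, hne⟩ := Finset.one_lt_card.1 (hN.card_eq i₀ ▸ hm)
    exact hne ((hN.unique_through P h i₀).unique ⟨h1, hP _ h1⟩ ⟨h2, hP _ h2⟩)
  obtain ⟨w, hw⟩ : ∃ w, ∀ L : {L // L ∈ A i₀}, φ L.1 w ≠ 0 := by
    refine Module.Dual.exists_forall_ne_zero_of_forall_exists
      (fun L : {L // L ∈ A i₀} => φ L.1) fun L => ?_
    by_contra! h
    exact hφ0 i₀ L.1 L.2 (LinearMap.ext h)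
  replace hw : ∀ L ∈ A i₀, φ L w ≠ 0 := fun L hL => hw ⟨L, hL⟩
  obtain ⟨L₀, hL₀⟩ : (A i₀).Nonempty := Finset.card_pos.1 (by rw [hN.card_eq]; omega)
  have hli : LinearIndependent ℂ ![w, v] := by
    rw [LinearIndependent.pair_iff]
    intro s t hst
    have h1 := congrArg (φ L₀) hst
    simp only [map_add, map_smul, hpv L₀ hL₀, smul_eq_mul, mul_zero, add_zero, map_zero] at h1
    have hs : s = 0 := (mul_eq_zero.1 h1).resolve_right (hw L₀ hL₀)
    subst hs
    simpa [hv0] using hst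
  obtain ⟨u, hu⟩ := exists_linearIndependent_cons_of_lt_finrank hli (by simp)
  let bas := basisOfLinearIndependentOfCardEqFinrank hu (by simp)
  have hb0 : bas 0 = u := by simp [bas]
  have hb1 : bas 1 = w := by
    simp only [bas, coe_basisOfLinearIndependentOfCardEqFinrank]; rfl
  have hb2 : bas 2 = v := by
    simp only [bas, coe_basisOfLinearIndependentOfCardEqFinrank]; rfl
  have hspan : ∀ q : Fin 3 → ℂ, ∃ z x y : ℂ, q = z • u + x • w + y • v := by
    intro q
    refine ⟨bas.repr q 0, bas.repr q 1, bas.repr q 2, ?_⟩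
    conv_lhs => rw [← bas.sum_repr q]
    rw [Fin.sum_univ_three, hb0, hb1, hb2]
  have hfext : ∀ f g : (Fin 3 → ℂ) →ₗ[ℂ] ℂ, f u = g u → f w = g w → f v = g v → f = g := by
    intro f g h0 h1 h2
    refine bas.ext fun i => ?_
    fin_cases i
    · simpa [hb0] using h0
    · simpa [hb1] using h1
    · simpa [hb2] using h2
  set α : Set P2 → ℂ := fun L => -(φ L u) / φ L w with hα
  have hpt : ∀ L ∈ A i₀, ∀ p ∈ X, p ∈ L → ∃ z y : ℂ, z ≠ 0 ∧
      p.rep = z • (u + α L • w + y • v) := by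
    intro L hL p hpX hpL
    obtain ⟨z, x, y, hq⟩ := hspan p.rep
    have h1 := (hmem i₀ L hL p).1 hpL
    rw [hq] at h1
    simp only [map_add, map_smul, hpv L hL, smul_eq_mul, mul_zero, add_zero] at h1
    have hz : z ≠ 0 := by
      rintro rfl
      have hx : x = 0 := by simpa [hw L hL] using h1
      subst hx
      apply hPX
      have : p = P := by
        rw [← p.mk_rep, ← P.mk_rep, Projectivization.mk_eq_mk_iff']
        exact ⟨y, by rw [hq]; simp [hv]⟩
      rwa [← this]
    refine ⟨z, y / z, hz, ?_⟩
    have hx : x = z * α L := by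
      have := hw L hL
      simp only [hα]
      field_simp
      linear_combination h1
    rw [hq, hx, smul_add, smul_add, smul_smul, smul_smul, mul_div_cancel₀ _ hz]
  have hov : ∀ j, j ≠ i₀ → ∀ L ∈ A j, φ L v ≠ 0 := by
    intro j hj L hL h0
    obtain ⟨p, hpX, hp0, hpL⟩ := hN.meets i₀ j hj.symm L₀ hL₀ L hL
    obtain ⟨z, y, hz, hq⟩ := hpt L₀ hL₀ p hpX hp0
    have h1 := (hmem j L hL p).1 hpL
    rw [hq] at h1
    simp only [map_add, map_smul, h0, smul_eq_mul, mul_zero, add_zero] at h1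
    have h2 := (mul_eq_zero.1 h1).resolve_left hz
    have hw0 := hw L₀ hL₀
    have : L = L₀ := by
      refine hprop j i₀ L hL L₀ hL₀ (φ L w / φ L₀ w) (hfext _ _ ?_ ?_ ?_)
      · simp only [LinearMap.smul_apply, smul_eq_mul]
        simp only [hα] at h2
        field_simp at h2 ⊢
        linear_combination h2
      · simp [hw0]
      · simp [h0, hpv L₀ hL₀]
    subst this
    exact Finset.disjoint_left.1 (hN.disj j i₀ hj) hL hL₀
  set β : Set P2 → ℂ × ℂ := fun L => (-(φ L w) / φ L v, -(φ L u) / φ L v) with hβ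
  have hβinj : ∀ i j, i ≠ i₀ → j ≠ i₀ → ∀ L ∈ A i, ∀ L' ∈ A j, β L = β L' → L = L' := by
    intro i j hi hj L hL L' hL' h
    have h1 := hov i hi L hL
    have h2 := hov j hj L' hL'
    simp only [hβ, Prod.mk.injEq] at h
    obtain ⟨ha, hb⟩ := h
    refine hprop i j L hL L' hL' (φ L v / φ L' v) (hfext _ _ ?_ ?_ ?_)
    · simp only [LinearMap.smul_apply, smul_eq_mul]
      field_simp at hb ⊢
      linear_combination -hb
    · simp only [LinearMap.smul_apply, smul_eq_mul]
      field_simp at ha ⊢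
      linear_combination -ha
    · simp [h2]
  have hαinj : Set.InjOn α (A i₀) := by
    intro L hL L' hL' h
    have h1 := hw L hL
    have h2 := hw L' hL'
    simp only [hα] at h
    refine hprop i₀ i₀ L hL L' hL' (φ L w / φ L' w) (hfext _ _ ?_ ?_ ?_)
    · simp only [LinearMap.smul_apply, smul_eq_mul]
      field_simp at h ⊢
      linear_combination -h
    · simp [h2]
    · simp [hpv L hL, hpv L' hL']
  have hinc : ∀ j, j ≠ i₀ → ∀ L ∈ A j, ∀ (p : P2) (z a y : ℂ), z ≠ 0 →
      p.rep = z • (u + a • w + y • v) → (p ∈ L ↔ (β L).1 * a + (β L).2 = y) := by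
    intro j hj L hL p z a y hz hq
    have h1 := hov j hj L hL
    rw [hmem j L hL, hq]
    simp only [map_add, map_smul, smul_eq_mul, mul_eq_zero, hz, false_or, hβ]
    constructor
    · intro h
      field_simp
      linear_combination -h
    · intro h
      field_simp at h
      linear_combination -h
  refine core m hm ((A i₀).image α) ?_ (fun j => (A (e j)).image β) ?_ ?_ ?_
  · rw [Finset.card_image_of_injOn hαinj, hN.card_eq]
  · intro j
    rw [Finset.card_image_of_injOn, hN.card_eq]
    intro L hL L' hL' h
    exact hβinj _ _ (hei j) (hei j) L hL L' hL' h
  · intro i j hij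
    rw [Finset.disjoint_left]
    intro b hb hb'
    obtain ⟨L, hL, rfl⟩ := Finset.mem_image.1 hb
    obtain ⟨L', hL', h⟩ := Finset.mem_image.1 hb'
    have := hβinj _ _ (hei j) (hei i) L' hL' L hL h
    subst this
    exact Finset.disjoint_left.1 (hN.disj _ _ (fun h => hij (he h))) hL hL'
  · intro a ha i j
    obtain ⟨M, hM, rfl⟩ := Finset.mem_image.1 ha
    have hval : ∀ i, Set.InjOn (fun L => (β L).1 * α M + (β L).2) (A (e i)) := by
      intro i L hL L' hL' h
      obtain ⟨p, hpX, hpM, hpL⟩ := hN.meets i₀ (e i) (hei i).symm M hM L hL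
      obtain ⟨z, y, hz, hq⟩ := hpt M hM p hpX hpM
      have h1 := (hinc _ (hei i) L hL p z _ y hz hq).1 hpL
      have h2 := (hinc _ (hei i) L' hL' p z _ y hz hq).2 (h.symm.trans h1)
      exact (hN.unique_through p hpX (e i)).unique ⟨hL, hpL⟩ ⟨hL', h2⟩
    have hsub : ∀ i j, (A (e i)).image (fun L => (β L).1 * α M + (β L).2)
        ⊆ (A (e j)).image (fun L => (β L).1 * α M + (β L).2) := by
      intro i j y' hy'
      obtain ⟨L, hL, rfl⟩ := Finset.mem_image.1 hy'
      obtain ⟨p, hpX, hpM, hpL⟩ := hN.meets i₀ (e i) (hei i).symm M hM L hL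
      obtain ⟨z, y, hz, hq⟩ := hpt M hM p hpX hpM
      have h1 := (hinc _ (hei i) L hL p z _ y hz hq).1 hpL
      obtain ⟨L', ⟨hL', hpL'⟩, -⟩ := hN.unique_through p hpX (e j)
      have h2 := (hinc _ (hei j) L' hL' p z _ y hz hq).1 hpL'
      exact Finset.mem_image.2 ⟨L', hL', h2.trans h1.symm⟩
    have hprod : ∀ i, ∏ b ∈ (A (e i)).image β, (Polynomial.X - C (b.1 * α M + b.2) : ℂ[X])
        = ∏ y ∈ (A (e i)).image (fun L => (β L).1 * α M + (β L).2), (Polynomial.X - C y) := by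
      intro i
      rw [Finset.prod_image (hval i), Finset.prod_image]
      intro L hL L' hL' h
      exact hβinj _ _ (hei i) (hei i) L hL L' hL' h
    rw [hprod i, hprod j, (hsub i j).antisymm (hsub j i)]

/-- For a nontrivial (k,m)-net in ℙ²(ℂ) with at least one class a pencil,
one has k ≤ 4; moreover if k = 4 then m ≥ 4. -/
theorem net_with_pencil_k_le_four (k m : ℕ) (A : Fin k → Finset (Set P2)) (X : Set P2)
    (hk : 3 ≤ k) (hm : 1 < m) (hN : IsNet k m A X)
    (hpen : ∃ i : Fin k, IsPencil (A i)) :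
    k ≤ 4 ∧ (k = 4 → 4 ≤ m) := by
  obtain ⟨i, hi⟩ := hpen
  have h := net_pencil_le_three k m A X hm hN i hi
  exact ⟨by omega, fun h4 => by omega⟩
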